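/- arXiv:0804.2282 — 4 statements merged into one kernel-verified Lean document; each statement's English description precedes it below -/
import Mathlib

section
/- Let a : I → ℝ be twice continuously differentiable and set ψ(x) := ψ̃(x)(1 + ℏ a(x)) where ψ̃(x) := V₀(x;ℏ)^{-1/4} e^{S(x;ℏ)/ℏ}. Then ψ solves −ℏ² ψ'' + V ψ = 0 on I if and only if a satisfies the first-order-in-(a' ψ̃²) equation (a'(x) ψ̃(x)²)' = −V₂(x;ℏ) ψ̃(x)² (1/ℏ + a(x)) on I, where V₂(x;ℏ) := (1/4)⟨x⟩^{-2} − V₀''(x;ℏ)/(4 V₀(x;ℏ)) + 5 (V₀'(x;ℏ))²/(16 V₀(x;ℏ)²). -/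
/-- The modified potential `V₀(x;ℏ) = V(x) + (ℏ²/4)⟨x⟩⁻²` where `⟨x⟩ = √(1+x²)`. -/
noncomputable def V0 (V : ℝ → ℝ) (h x : ℝ) : ℝ := V x + h ^ 2 / 4 * (1 + x ^ 2)⁻¹

/-- The action `S(x;ℏ) = ∫_{x₀}^x √(V₀(t;ℏ)) dt`. -/
noncomputable def Sfun (V : ℝ → ℝ) (h x₀ x : ℝ) : ℝ := ∫ t in x₀..x, Real.sqrt (V0 V h t)

/-- `V₂(x;ℏ) = (1/4)⟨x⟩⁻² − V₀''/(4V₀) + 5(V₀')²/(16V₀²)`. -/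
noncomputable def V2 (V : ℝ → ℝ) (h x : ℝ) : ℝ :=
  1 / 4 * (1 + x ^ 2)⁻¹ - deriv (deriv (V0 V h)) x / (4 * V0 V h x)
    + 5 * (deriv (V0 V h) x) ^ 2 / (16 * (V0 V h x) ^ 2)

/-- The WKB ansatz `ψ̃(x) = V₀(x;ℏ)^{-1/4} e^{S(x;ℏ)/ℏ}`. -/
noncomputable def psiWKB (V : ℝ → ℝ) (h x₀ x : ℝ) : ℝ :=
  V0 V h x ^ (-(1 : ℝ) / 4) * Real.exp (Sfun V h x₀ x / h)

theorem ContDiffOn.hasDerivAt_deriv_deriv {f : ℝ → ℝ} {I : Set ℝ} (hf : ContDiffOn ℝ 2 f I)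
    (hI : IsOpen I) {x : ℝ} (hx : x ∈ I) :
    HasDerivAt f (deriv f x) x ∧ HasDerivAt (deriv f) (deriv (deriv f) x) x := by
  have hf' : ContDiffOn ℝ 1 (deriv f) I := hf.deriv_of_isOpen hI (by norm_num)
  exact ⟨((hf.differentiableOn (by norm_num)).differentiableAt (hI.mem_nhds hx)).hasDerivAt,
    ((hf'.differentiableOn (by norm_num)).differentiableAt (hI.mem_nhds hx)).hasDerivAt⟩

theorem contDiffOn_V0 {V : ℝ → ℝ} {I : Set ℝ} (hV : ContDiffOn ℝ 2 V I) (h : ℝ) :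
    ContDiffOn ℝ 2 (V0 V h) I := by
  have hinv : ContDiff ℝ 2 fun x : ℝ => (1 + x ^ 2)⁻¹ :=
    ContDiff.inv (by fun_prop) fun x => by positivity
  exact hV.add (contDiff_const.mul hinv).contDiffOn

theorem hasDerivAt_Sfun {V : ℝ → ℝ} {I : Set ℝ} {h x₀ x : ℝ} (hI : IsOpen I)
    (hconv : Convex ℝ I) (hV : ContinuousOn (V0 V h) I) (hx₀ : x₀ ∈ I) (hx : x ∈ I) :
    HasDerivAt (Sfun V h x₀) (√(V0 V h x)) x := by
  have hc : ContinuousOn (fun t => √(V0 V h t)) I := hV.sqrt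
  have hsub : Set.uIcc x₀ x ⊆ I := hconv.ordConnected.uIcc_subset hx₀ hx
  exact intervalIntegral.integral_hasDerivAt_right (hc.mono hsub).intervalIntegrable
    (hc.stronglyMeasurableAtFilter hI x hx) (hc.continuousAt (hI.mem_nhds hx))

/-- The logarithmic derivative of the WKB ansatz. -/
noncomputable def logDerivWKB (V : ℝ → ℝ) (h x : ℝ) : ℝ :=
  √(V0 V h x) / h - deriv (V0 V h) x / (4 * V0 V h x)

theorem hasDerivAt_psiWKB {V : ℝ → ℝ} {h x₀ x : ℝ} (hpos : 0 < V0 V h x)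
    (hV : DifferentiableAt ℝ (V0 V h) x) (hS : HasDerivAt (Sfun V h x₀) (√(V0 V h x)) x) :
    HasDerivAt (psiWKB V h x₀) (psiWKB V h x₀ x * logDerivWKB V h x) x := by
  have hd := (hV.hasDerivAt.rpow_const (p := -(1 : ℝ) / 4) (Or.inl hpos.ne')).mul
    (hS.div_const h).exp
  refine hd.congr_deriv ?_
  simp only [psiWKB, logDerivWKB]
  rw [Real.rpow_sub_one hpos.ne']
  ring

theorem hasDerivAt_logDerivWKB {V : ℝ → ℝ} {h x : ℝ} (hh : h ≠ 0) (hpos : 0 < V0 V h x)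
    (hV : HasDerivAt (V0 V h) (deriv (V0 V h) x) x)
    (hV' : HasDerivAt (deriv (V0 V h)) (deriv (deriv (V0 V h)) x) x) :
    HasDerivAt (logDerivWKB V h)
      (V x / h ^ 2 + V2 V h x - logDerivWKB V h x ^ 2) x := by
  have hd := ((hV.sqrt hpos.ne').div_const h).sub
    (hV'.div (hV.const_mul 4) (by positivity))
  refine hd.congr_deriv ?_
  have hVx : V x = V0 V h x - h ^ 2 / 4 * (1 + x ^ 2)⁻¹ := by simp [V0]
  have hs : 0 < √(V0 V h x) := Real.sqrt_pos.2 hpos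
  have hsq : V0 V h x = √(V0 V h x) ^ 2 := (Real.sq_sqrt hpos.le).symm
  simp only [hVx, V2, logDerivWKB]
  generalize √(V0 V h x) = s at *
  rw [hsq]
  have hx : (1 + x ^ 2 : ℝ) ≠ 0 := by positivity
  field_simp
  ring

/-- with `ψ = ψ̃ (1 + ℏ a)`, `ψ` solves `−ℏ²ψ'' + Vψ = 0` on `I` iff
`(a' ψ̃²)' = −V₂ ψ̃² (1/ℏ + a)` on `I`. -/
theorem wkb_correction_equation_equiv
    (I : Set ℝ) (hIopen : IsOpen I) (hIconv : Convex ℝ I)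
    (V a : ℝ → ℝ) (h x₀ : ℝ) (hh : 0 < h) (hx₀ : x₀ ∈ I)
    (hV : ContDiffOn ℝ 2 V I) (ha : ContDiffOn ℝ 2 a I)
    (hpos : ∀ x ∈ I, 0 < V0 V h x) :
    (∀ x ∈ I,
        -h ^ 2 * deriv (deriv (fun y => psiWKB V h x₀ y * (1 + h * a y))) x
          + V x * (psiWKB V h x₀ x * (1 + h * a x)) = 0)
      ↔ (∀ x ∈ I,
        deriv (fun y => deriv a y * psiWKB V h x₀ y ^ 2) x
          = -(V2 V h x) * psiWKB V h x₀ x ^ 2 * (1 / h + a x)) := by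
  have hW := contDiffOn_V0 hV h
  have hψ : ∀ x ∈ I, HasDerivAt (psiWKB V h x₀) (psiWKB V h x₀ x * logDerivWKB V h x) x :=
    fun x hx => hasDerivAt_psiWKB (hpos x hx)
      (hW.hasDerivAt_deriv_deriv hIopen hx).1.differentiableAt
      (hasDerivAt_Sfun hIopen hIconv hW.continuousOn hx₀ hx)
  refine forall₂_congr fun x hx => ?_
  obtain ⟨ha₁, ha₂⟩ := ha.hasDerivAt_deriv_deriv hIopen hx
  obtain ⟨hW₁, hW₂⟩ := hW.hasDerivAt_deriv_deriv hIopen hx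
  have hg := hasDerivAt_logDerivWKB hh.ne' (hpos x hx) hW₁ hW₂
  have hfirst : deriv (fun y => psiWKB V h x₀ y * (1 + h * a y)) =ᶠ[nhds x] fun y =>
      psiWKB V h x₀ y * logDerivWKB V h y * (1 + h * a y)
        + psiWKB V h x₀ y * (h * deriv a y) := by
    filter_upwards [hIopen.mem_nhds hx] with y hy
    exact ((hψ y hy).mul
      (((ha.hasDerivAt_deriv_deriv hIopen hy).1.const_mul h).const_add 1)).deriv
  have hsecond := (((hψ x hx).mul hg).mul ((ha₁.const_mul h).const_add 1)).add
    ((hψ x hx).mul (ha₂.const_mul h))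
  have hflux := ha₂.mul ((hψ x hx).pow 2)
  have hψ_pos : 0 < psiWKB V h x₀ x :=
    mul_pos (Real.rpow_pos_of_pos (hpos x hx) _) (Real.exp_pos _)
  rw [hfirst.deriv_eq]
  erw [hsecond.deriv, hflux.deriv]
  simp only [Pi.mul_apply, Pi.pow_apply]
  generalize psiWKB V h x₀ x = p at *
  generalize logDerivWKB V h x = g at *
  rw [← sub_eq_zero (b := -(V2 V h x) * p ^ 2 * (1 / h + a x))]
  have key : p * (-h ^ 2 * (((p * g) * g + p * (V x / h ^ 2 + V2 V h x - g ^ 2)) * (1 + h * a x)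
      + p * g * (h * deriv a x) + (p * g * (h * deriv a x) + p * (h * deriv (deriv a) x)))
      + V x * (p * (1 + h * a x))) = -h ^ 3 * (deriv (deriv a) x * p ^ 2
      + deriv a x * (2 * p * (p * g)) + V2 V h x * p ^ 2 * (1 / h + a x)) := by
    field_simp
    ring
  constructor
  · intro H
    have hz : -h ^ 3 * (deriv (deriv a) x * p ^ 2
      + deriv a x * (2 * p * (p * g)) + V2 V h x * p ^ 2 * (1 / h + a x)) = 0 := by
      rw [← key, H, mul_zero]
    have := (mul_eq_zero.1 hz).resolve_left (by simpa using hh.ne')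
    rw [← this]
    norm_num
  · intro H
    refine (mul_eq_zero.1 (key.trans ?_)).resolve_left hψ_pos.ne'
    norm_num at H
    rw [one_div, H, mul_zero]
end

section
/- There exist x₀ > 0 and, for every integer k ≥ 0, a constant C_{k,μ} such that for all x > x₀ and all 0 < ℏ < 1 the function V₂(x;ℏ) := (1/4)⟨x⟩^{-2} − V₀''(x;ℏ)/(4 V₀(x;ℏ)) + 5 (V₀'(x;ℏ))²/(16 V₀(x;ℏ)²) satisfies |∂_x^k V₂(x;ℏ)| ≤ C_{k,μ} x^{-3-k} (in particular the x^{-2} contributions cancel, leaving x^{-3} decay). Moreover ρ(x) := ∫_{x₀}^{x} V₀(y;ℏ)^{-1/2} |V₂(y;ℏ)| dy is bounded on (x₀,∞) by a constant C(μ) uniformly in 0 < ℏ < 1. -/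
section Symbols

open Set Filter Topology
open scoped ContDiff

/-- The family `f` satisfies symbol bounds of order `m` on `(a, ∞)`, uniformly in the parameter, for
all derivatives up to order `N`. -/
def SymbolBound {ι : Type*} (a : ℝ) : ℕ → ℤ → (ι → ℝ → ℝ) → Prop
  | 0, m, f => ∃ C, ∀ i x, a < x → |f i x| ≤ C * x ^ m
  | N + 1, m, f => (∃ C, ∀ i x, a < x → |f i x| ≤ C * x ^ m) ∧
      (∀ i x, a < x → DifferentiableAt ℝ (f i) x) ∧
      SymbolBound a N (m - 1) (fun i => deriv (f i))

namespace SymbolBound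

variable {ι : Type*} {a : ℝ} {N : ℕ} {m n : ℤ} {f g : ι → ℝ → ℝ}

lemma bound (hf : SymbolBound a N m f) : ∃ C, ∀ i x, a < x → |f i x| ≤ C * x ^ m := by
  cases N with
  | zero => exact hf
  | succ N => exact hf.1

lemma of_succ (hf : SymbolBound a (N + 1) m f) : SymbolBound a N m f := by
  induction N generalizing m f with
  | zero => exact hf.1
  | succ N ih => exact ⟨hf.1, hf.2.1, ih hf.2.2⟩

lemma congr (hf : SymbolBound a N m f) (h : ∀ i x, a < x → g i x = f i x) :
    SymbolBound a N m g := by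
  induction N generalizing m f g with
  | zero =>
    obtain ⟨C, hC⟩ := hf
    exact ⟨C, fun i x hx => by rw [h i x hx]; exact hC i x hx⟩
  | succ N ih =>
    have hev : ∀ i x, a < x → g i =ᶠ[𝓝 x] f i := fun i x hx => by
      filter_upwards [Ioi_mem_nhds hx] with y hy using h i y hy
    obtain ⟨⟨C, hC⟩, hd, hs⟩ := hf
    exact ⟨⟨C, fun i x hx => by rw [h i x hx]; exact hC i x hx⟩,
      fun i x hx => (hd i x hx).congr_of_eventuallyEq (hev i x hx),
      ih hs fun i x hx => (hev i x hx).deriv_eq⟩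

lemma mono_order (ha : 1 ≤ a) (hmn : m ≤ n) (hf : SymbolBound a N m f) :
    SymbolBound a N n f := by
  have key : ∀ {m n : ℤ} {f : ι → ℝ → ℝ}, m ≤ n →
      (∃ C, ∀ i x, a < x → |f i x| ≤ C * x ^ m) →
      ∃ C, ∀ i x, a < x → |f i x| ≤ C * x ^ n := by
    rintro m n f hmn ⟨C, hC⟩
    refine ⟨|C|, fun i x hx => (hC i x hx).trans ?_⟩
    have hx1 : 1 ≤ x := ha.trans hx.le
    have hpos : 0 < x ^ m := zpow_pos (by linarith) m
    exact mul_le_mul (le_abs_self C) (zpow_le_zpow_right₀ hx1 hmn) hpos.le (abs_nonneg C)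
  induction N generalizing m n f with
  | zero => exact key hmn hf
  | succ N ih => exact ⟨key hmn hf.1, hf.2.1, ih (by lia) hf.2.2⟩

lemma add (hf : SymbolBound a N m f) (hg : SymbolBound a N m g) :
    SymbolBound a N m (fun i x => f i x + g i x) := by
  have key : ∀ {N : ℕ} {m : ℤ} {f g : ι → ℝ → ℝ}, SymbolBound a N m f → SymbolBound a N m g →
      ∃ C, ∀ i x, a < x → |f i x + g i x| ≤ C * x ^ m := by
    intro N m f g hf hg
    obtain ⟨C, hC⟩ := hf.bound
    obtain ⟨D, hD⟩ := hg.bound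
    exact ⟨C + D, fun i x hx => by
      linarith [abs_add_le (f i x) (g i x), hC i x hx, hD i x hx]⟩
  induction N generalizing m f g with
  | zero => exact key hf hg
  | succ N ih =>
    exact ⟨key hf hg, fun i x hx => (hf.2.1 i x hx).add (hg.2.1 i x hx),
      (ih hf.2.2 hg.2.2).congr fun i x hx => deriv_fun_add (hf.2.1 i x hx) (hg.2.1 i x hx)⟩

lemma mul (ha : 1 ≤ a) (hf : SymbolBound a N m f) (hg : SymbolBound a N n g) :
    SymbolBound a N (m + n) (fun i x => f i x * g i x) := by
  have key : ∀ {N : ℕ} {m n : ℤ} {f g : ι → ℝ → ℝ}, SymbolBound a N m f → SymbolBound a N n g →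
      ∃ C, ∀ i x, a < x → |f i x * g i x| ≤ C * x ^ (m + n) := by
    intro N m n f g hf hg
    obtain ⟨C, hC⟩ := hf.bound
    obtain ⟨D, hD⟩ := hg.bound
    refine ⟨C * D, fun i x hx => ?_⟩
    have hx0 : x ≠ 0 := by linarith
    calc |f i x * g i x| = |f i x| * |g i x| := abs_mul _ _
      _ ≤ (C * x ^ m) * (D * x ^ n) :=
        mul_le_mul (hC i x hx) (hD i x hx) (abs_nonneg _) ((abs_nonneg _).trans (hC i x hx))
      _ = C * D * x ^ (m + n) := by rw [zpow_add₀ hx0]; ring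
  induction N generalizing m n f g with
  | zero => exact key hf hg
  | succ N ih =>
    refine ⟨key hf hg, fun i x hx => (hf.2.1 i x hx).mul (hg.2.1 i x hx), ?_⟩
    have h₁ := ih hf.2.2 hg.of_succ
    have h₂ := ih hf.of_succ hg.2.2
    rw [show m - 1 + n = m + n - 1 by ring] at h₁
    rw [show m + (n - 1) = m + n - 1 by ring] at h₂
    exact (h₁.add h₂).congr fun i x hx => deriv_fun_mul (hf.2.1 i x hx) (hg.2.1 i x hx)

lemma zero : SymbolBound a N m (fun (_ : ι) _ => 0) := by
  induction N generalizing m with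
  | zero => exact ⟨0, by simp⟩
  | succ N ih => exact ⟨⟨0, by simp⟩, by simp, ih.congr (by simp)⟩

/-- A bounded family of constants is a symbol of order zero. -/
lemma const {c : ι → ℝ} {B : ℝ} (hc : ∀ i, |c i| ≤ B) :
    SymbolBound a N 0 (fun i _ => c i) := by
  have key : ∃ C, ∀ i x, a < x → |c i| ≤ C * x ^ (0 : ℤ) := ⟨B, fun i x _ => by simpa using hc i⟩
  cases N with
  | zero => exact key
  | succ N => exact ⟨key, by simp, zero.congr (by simp)⟩

lemma smul (ha : 1 ≤ a) (c : ℝ) (hf : SymbolBound a N m f) :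
    SymbolBound a N m (fun i x => c * f i x) := by
  simpa using (const (c := fun _ : ι => c) (B := |c|) (fun _ => le_rfl)).mul ha hf

lemma id (ha : 1 ≤ a) : SymbolBound a N 1 (fun (_ : ι) x => x) := by
  have key : ∃ C, ∀ (_ : ι) x, a < x → |x| ≤ C * x ^ (1 : ℤ) :=
    ⟨1, fun _ x hx => by rw [abs_of_pos (by linarith)]; simp⟩
  cases N with
  | zero => exact key
  | succ N =>
    refine ⟨key, by simp, ?_⟩
    exact (const (c := fun _ : ι => 1) (B := 1) (by simp)).congr (by simp)

/-- The reciprocal of an elliptic symbol of order `m` is a symbol of order `-m`. -/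
lemma inv (ha : 1 ≤ a) (hf : SymbolBound a N m f) {c : ℝ} (hc : 0 < c)
    (hfc : ∀ i x, a < x → c * x ^ m ≤ f i x) :
    SymbolBound a N (-m) (fun i x => (f i x)⁻¹) := by
  have hpos : ∀ x, a < x → 0 < c * x ^ m := fun x hx =>
    mul_pos hc (zpow_pos (by linarith) m)
  have key : ∃ C, ∀ i x, a < x → |(f i x)⁻¹| ≤ C * x ^ (-m) := by
    refine ⟨c⁻¹, fun i x hx => ?_⟩
    rw [abs_of_pos (inv_pos.2 ((hpos x hx).trans_le (hfc i x hx))), zpow_neg, ← mul_inv]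
    exact inv_anti₀ (hpos x hx) (hfc i x hx)
  induction N with
  | zero => exact key
  | succ N ih =>
    have hne : ∀ i x, a < x → f i x ≠ 0 := fun i x hx =>
      ((hpos x hx).trans_le (hfc i x hx)).ne'
    refine ⟨key, fun i x hx => (hf.2.1 i x hx).inv (hne i x hx), ?_⟩
    have hi := ih hf.of_succ
    have h := (hf.2.2.mul ha (hi.mul ha hi)).smul ha (-1)
    rw [show m - 1 + (-m + -m) = -m - 1 by ring] at h
    refine h.congr fun i x hx => ?_
    rw [deriv_fun_inv'' (hf.2.1 i x hx) (hne i x hx)]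
    field_simp

lemma abs_iteratedDeriv_le {k : ℕ} (hf : SymbolBound a k m f) :
    ∃ C, ∀ i x, a < x → |iteratedDeriv k (f i) x| ≤ C * x ^ (m - k) := by
  induction k generalizing m f with
  | zero => simpa using hf.bound
  | succ k ih =>
    obtain ⟨C, hC⟩ := ih hf.2.2
    refine ⟨C, fun i x hx => ?_⟩
    rw [iteratedDeriv_succ']
    convert hC i x hx using 3
    push_cast
    ring

lemma of_iteratedDeriv (hs : ∀ i, ContDiffOn ℝ ∞ (f i) (Ioi a))
    (hb : ∀ k : ℕ, ∃ C, ∀ i x, a < x → |iteratedDeriv k (f i) x| ≤ C * x ^ (m - k)) :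
    SymbolBound a N m f := by
  induction N generalizing m f with
  | zero => simpa [SymbolBound] using hb 0
  | succ N ih =>
    refine ⟨by simpa using hb 0, fun i x hx => ((hs i).contDiffAt (Ioi_mem_nhds hx)).differentiableAt
      (by simp), ih (fun i => (hs i).deriv_of_isOpen isOpen_Ioi (by simp)) fun k => ?_⟩
    obtain ⟨C, hC⟩ := hb (k + 1)
    refine ⟨C, fun i x hx => ?_⟩
    have h := hC i x hx
    rw [iteratedDeriv_succ'] at h
    convert h using 3
    push_cast
    ring

end SymbolBound

end Symbols

section Remainder

variable {ι : Type*} {a : ℝ}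

lemma symbolBound_inv_id (ha : 1 ≤ a) (N : ℕ) :
    SymbolBound a N (-1) (fun (_ : ι) x => x⁻¹) :=
  (SymbolBound.id ha).inv ha one_pos (by simp)

lemma symbolBound_inv_one_add_sq (ha : 1 ≤ a) (N : ℕ) :
    SymbolBound a N (-2) (fun (_ : ι) x => (1 + x ^ 2)⁻¹) := by
  have h1 : SymbolBound a N 2 (fun (_ : ι) (_ : ℝ) => (1 : ℝ)) :=
    (SymbolBound.const (B := 1) (by simp)).mono_order ha (by norm_num)
  have h2 : SymbolBound a N 2 (fun (_ : ι) x => x * x) :=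
    (SymbolBound.id ha).mul ha (SymbolBound.id ha)
  refine SymbolBound.inv ha ((h1.add h2).congr fun i x _ => by ring) one_pos fun i x _ => ?_
  rw [one_mul, zpow_ofNat]
  linarith

/-- The leading `x⁻²` terms of `⟨x⟩⁻²` and `x⁻²` cancel. -/
lemma symbolBound_inv_one_add_sq_sub (ha : 1 ≤ a) (N : ℕ) :
    SymbolBound a N (-3) (fun (_ : ι) x => (1 + x ^ 2)⁻¹ - x⁻¹ ^ 2) := by
  have hx := symbolBound_inv_id (ι := ι) ha N
  have h := ((symbolBound_inv_one_add_sq (ι := ι) ha N).mul ha (hx.mul ha hx)).smul ha (-1)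
  refine (h.mono_order ha (by norm_num)).congr fun i x hx => ?_
  have : x ≠ 0 := by linarith
  have : 1 + x ^ 2 ≠ 0 := by positivity
  field_simp
  ring

/-- If `v = c x⁻² + R` with `R` of order `-3` and `v` is bounded below by a multiple of `x⁻²`, then
the Liouville-Green error term of `v` is a symbol of order `-3`. -/
lemma symbolBound_liouvilleGreen_error (ha : 1 ≤ a) {v R : ι → ℝ → ℝ} {c : ι → ℝ} {B δ : ℝ}
    (hc : ∀ i, |c i| ≤ B) (hδ : 0 < δ) (hR : ∀ N, SymbolBound a N (-3) R)
    (hv : ∀ i x, a < x → v i x = c i * x⁻¹ ^ 2 + R i x)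
    (hδv : ∀ i x, a < x → δ * x ^ (-2 : ℤ) ≤ v i x) (N : ℕ) :
    SymbolBound a N (-3) (fun i x => 1 / 4 * (1 + x ^ 2)⁻¹ - deriv (deriv (v i)) x / (4 * v i x)
      + 5 * (deriv (v i) x) ^ 2 / (16 * (v i x) ^ 2)) := by
  have hX : ∀ N, SymbolBound a N (-1) (fun (_ : ι) x => x⁻¹) := symbolBound_inv_id ha
  have hvS : SymbolBound a N (-2) v := by
    have h := (SymbolBound.const hc).mul ha ((hX N).mul ha (hX N))
    exact (h.add ((hR N).mono_order ha (by norm_num))).congr fun i x hx => by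
      rw [hv i x hx]; ring
  have hu : SymbolBound a N 2 (fun i x => (v i x)⁻¹) := hvS.inv ha hδ hδv
  have hdX : ∀ (n : ℕ) (x : ℝ), a < x →
      HasDerivAt (fun y : ℝ => y⁻¹ ^ n) (n * x⁻¹ ^ (n - 1) * -(x ^ 2)⁻¹) x := fun n x hx =>
    (hasDerivAt_inv (by linarith)).fun_pow n
  have hd1 : ∀ i x, a < x → deriv (v i) x = -2 * c i * x⁻¹ ^ 3 + deriv (R i) x := by
    intro i x hx
    have hev : v i =ᶠ[nhds x] fun y => c i * y⁻¹ ^ 2 + R i y := by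
      filter_upwards [Ioi_mem_nhds hx] with y hy using hv i y hy
    rw [hev.deriv_eq,
      (((hdX 2 x hx).const_mul (c i)).fun_add ((hR 1).2.1 i x hx).hasDerivAt).deriv]
    push_cast
    ring
  have hd2 : ∀ i x, a < x → deriv (deriv (v i)) x = 6 * c i * x⁻¹ ^ 4 + deriv (deriv (R i)) x := by
    intro i x hx
    have hev : deriv (v i) =ᶠ[nhds x] fun y => -2 * c i * y⁻¹ ^ 3 + deriv (R i) y := by
      filter_upwards [Ioi_mem_nhds hx] with y hy using hd1 i y hy
    rw [hev.deriv_eq,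
      (((hdX 3 x hx).const_mul (-2 * c i)).fun_add ((hR 2).2.2.2.1 i x hx).hasDerivAt).deriv]
    push_cast
    ring
  have hP : SymbolBound a N (-4) (fun i x => deriv (R i) x + 2 * (R i x * x⁻¹)) :=
    (hR (N + 1)).2.2.add (((hR N).mul ha (hX N)).smul ha 2)
  have hQ : SymbolBound a N (-5)
      (fun i x => deriv (deriv (R i)) x + (-6) * (R i x * (x⁻¹ * x⁻¹))) :=
    (hR (N + 2)).2.2.2.2.add (((hR N).mul ha ((hX N).mul ha (hX N))).smul ha (-6))
  have hPu := hP.mul ha hu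
  have h1 := (symbolBound_inv_one_add_sq_sub (ι := ι) ha N).smul ha (1 / 4)
  have h2 := (hQ.mul ha hu).smul ha (-1 / 4)
  have h3 := (hPu.mul ha (hX N)).smul ha (-5 / 4)
  have h4 := ((hPu.mul ha hPu).mono_order ha (n := -3) (by norm_num)).smul ha (5 / 16)
  refine (((h1.add h2).add h3).add h4).congr fun i x hx => ?_
  have hx0 : x ≠ 0 := by linarith
  have hvne : v i x ≠ 0 := by
    have : 0 < δ * x ^ (-2 : ℤ) := mul_pos hδ (zpow_pos (by linarith) _)
    exact (this.trans_le (hδv i x hx)).ne'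
  have hRv : R i x = v i x - c i * x⁻¹ ^ 2 := by rw [hv i x hx]; ring
  rw [hd1 i x hx, hd2 i x hx, hRv]
  have : 1 + x ^ 2 ≠ 0 := by positivity
  generalize v i x = w at *
  field_simp
  ring

end Remainder

section Potential

open Set MeasureTheory
open scoped ContDiff

variable {V : ℝ → ℝ} {μ a : ℝ}

lemma symbolBound_potential_sub (ha : 1 ≤ a) (hV : ContDiff ℝ ∞ V)
    (hVp : ∀ k : ℕ, ∃ C > 0, ∀ x : ℝ, 1 ≤ x →
      |iteratedDeriv k (fun t => V t - μ ^ 2 / t ^ 2) x| ≤ C * x ^ (-3 - k : ℝ)) (N : ℕ) :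
    SymbolBound a N (-3) (fun (_ : Ioo (0 : ℝ) 1) t => V t - μ ^ 2 / t ^ 2) := by
  refine SymbolBound.of_iteratedDeriv (fun _ => ?_) fun k => ?_
  · refine hV.contDiffOn.sub (contDiffOn_const.div (contDiff_id.pow 2).contDiffOn fun x hx => ?_)
    have : (0 : ℝ) < x := by linarith [mem_Ioi.1 hx]
    exact (pow_pos this 2).ne'
  · obtain ⟨C, -, hC⟩ := hVp k
    refine ⟨C, fun _ x hx => ?_⟩
    rw [← Real.rpow_intCast]
    push_cast
    exact hC x (ha.trans hx.le)

lemma symbolBound_V2 (ha : 1 ≤ a) (hμ : 0 < μ) (hV : ContDiff ℝ ∞ V)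
    (hVp : ∀ k : ℕ, ∃ C > 0, ∀ x : ℝ, 1 ≤ x →
      |iteratedDeriv k (fun t => V t - μ ^ 2 / t ^ 2) x| ≤ C * x ^ (-3 - k : ℝ))
    (hVa : ∀ x, a < x → μ ^ 2 / 2 * x ^ (-2 : ℤ) ≤ V x) (N : ℕ) :
    SymbolBound a N (-3) (fun h : Ioo (0 : ℝ) 1 => V2 V h) := by
  have hh : ∀ h : Ioo (0 : ℝ) 1, |(h : ℝ) ^ 2 / 4| ≤ 1 := by
    rintro ⟨h, h0, h1⟩
    rw [abs_of_nonneg (by positivity)]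
    nlinarith
  refine symbolBound_liouvilleGreen_error ha (v := fun h : Ioo (0 : ℝ) 1 => V0 V h)
    (R := fun h x => (V x - μ ^ 2 / x ^ 2) + (h : ℝ) ^ 2 / 4 * ((1 + x ^ 2)⁻¹ - x⁻¹ ^ 2))
    (c := fun h => μ ^ 2 + (h : ℝ) ^ 2 / 4) (B := μ ^ 2 + 1) (δ := μ ^ 2 / 2)
    (fun h => ?_) (by positivity) (fun N => ?_) (fun h x hx => ?_) (fun h x hx => ?_) N
  · refine (abs_add_le _ _).trans (add_le_add (le_of_eq (abs_of_pos (by positivity))) (hh h))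
  · refine (symbolBound_potential_sub ha hV hVp N).add ?_
    exact (SymbolBound.const hh).mul ha (symbolBound_inv_one_add_sq_sub ha N)
  · simp only [V0]
    ring
  · have : 0 ≤ (h : ℝ) ^ 2 / 4 * (1 + x ^ 2)⁻¹ := by positivity
    simp only [V0]
    linarith [hVa x hx]

lemma exists_potential_lower_bound (hμ : 0 < μ)
    (hVp : ∃ C > 0, ∀ x : ℝ, 1 ≤ x → |V x - μ ^ 2 / x ^ 2| ≤ C * x ^ (-3 : ℤ)) :
    ∃ a ≥ 1, ∀ x, a < x → μ ^ 2 / 2 * x ^ (-2 : ℤ) ≤ V x := by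
  obtain ⟨C, hC0, hC⟩ := hVp
  refine ⟨max 1 (2 * C / μ ^ 2), le_max_left _ _, fun x hx => ?_⟩
  have hx1 : 1 < x := (le_max_left _ _).trans_lt hx
  have hxC : 2 * C / μ ^ 2 < x := (le_max_right _ _).trans_lt hx
  have hx0 : 0 < x := by linarith
  have h := (abs_le.1 (hC x hx1.le)).1
  rw [div_lt_iff₀ (by positivity)] at hxC
  have key : C * x ^ (-3 : ℤ) ≤ μ ^ 2 / 2 * x ^ (-2 : ℤ) := by
    have : x ^ (-2 : ℤ) = x * x ^ (-3 : ℤ) := by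
      rw [show (-2 : ℤ) = 1 + -3 by norm_num, zpow_add₀ hx0.ne', zpow_one]
    rw [this, ← mul_assoc]
    exact mul_le_mul_of_nonneg_right (by linarith) (zpow_pos hx0 _).le
  have h2 : μ ^ 2 / x ^ 2 = μ ^ 2 * x ^ (-2 : ℤ) := by
    rw [zpow_neg, zpow_ofNat, div_eq_mul_inv]
  linarith

/-- The integral of `C y⁻²` over `(a, x)` is at most `C / a`. -/
lemma integral_le_div_of_le_inv_sq {g : ℝ → ℝ} {C x : ℝ} (ha : 0 < a) (hC : 0 ≤ C) (hx : a < x)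
    (hg0 : ∀ y, a < y → 0 ≤ g y) (hg : ∀ y, a < y → g y ≤ C * y ^ (-2 : ℤ)) :
    ∫ y in a..x, g y ≤ C / a := by
  have h0 : (0 : ℝ) ∉ uIcc a x := by
    rw [uIcc_of_le hx.le]
    exact fun h => absurd h.1 (not_le.2 ha)
  have hint : IntervalIntegrable (fun y : ℝ => C * y ^ (-2 : ℤ)) volume a x :=
    (intervalIntegral.intervalIntegrable_zpow (Or.inr h0)).const_mul C
  calc ∫ y in a..x, g y ≤ ∫ y in a..x, C * y ^ (-2 : ℤ) := by
        rw [intervalIntegral.integral_of_le hx.le, intervalIntegral.integral_of_le hx.le]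
        refine integral_mono_of_nonneg ?_ hint.1 ?_
        · exact (ae_restrict_iff' measurableSet_Ioc).2 (.of_forall fun y hy => hg0 y hy.1)
        · exact (ae_restrict_iff' measurableSet_Ioc).2 (.of_forall fun y hy => hg y hy.1)
    _ = C * (a⁻¹ - x⁻¹) := by
        rw [intervalIntegral.integral_const_mul, integral_zpow (Or.inr ⟨by norm_num, h0⟩)]
        norm_num
        ring_nf
        simp
    _ ≤ C / a := by
        rw [div_eq_mul_inv]
        have : 0 < x⁻¹ := inv_pos.2 (ha.trans hx)
        exact mul_le_mul_of_nonneg_left (by linarith) hC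

end Potential

/-- there exist `x₀ > 0` and constants `C_{k,μ}` such that for `x > x₀` and
`0 < ℏ < 1` one has `|∂_x^k V₂(x;ℏ)| ≤ C_{k,μ} x^{−3−k}` (the `x⁻²` contributions cancel),
and `ρ(x) = ∫_{x₀}^x V₀^{-1/2}|V₂|` is bounded on `(x₀,∞)` uniformly in `0 < ℏ < 1`. -/
theorem V2_cubic_decay_and_rho_bounded
    (V : ℝ → ℝ) (μ : ℝ) (hμ : 0 < μ)
    (hVsmooth : ∀ n : ℕ, ContDiff ℝ n V)
    (hVp : ∀ k : ℕ, ∃ C > 0, ∀ x : ℝ, 1 ≤ x →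
      |iteratedDeriv k (fun t => V t - μ ^ 2 / t ^ 2) x| ≤ C * x ^ (-3 - k : ℝ)) :
    ∃ x₀ > 0, (∀ x, x₀ < x → 0 < V x) ∧
      (∀ k : ℕ, ∃ C > 0, ∀ h ∈ Set.Ioo (0 : ℝ) 1, ∀ x, x₀ < x →
        |iteratedDeriv k (V2 V h) x| ≤ C * x ^ (-3 - k : ℝ)) ∧
      (∃ C > 0, ∀ h ∈ Set.Ioo (0 : ℝ) 1, ∀ x, x₀ < x →
        (∫ y in x₀..x, |V2 V h y| / Real.sqrt (V0 V h y)) ≤ C) := by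
  have hV := contDiff_infty.2 hVsmooth
  obtain ⟨a, ha, hVa⟩ := exists_potential_lower_bound (V := V) hμ (by
    obtain ⟨C, hC0, hC⟩ := hVp 0
    refine ⟨C, hC0, fun x hx => ?_⟩
    have h := hC x hx
    rw [iteratedDeriv_zero] at h
    rw [← Real.rpow_intCast]
    simpa using h)
  have ha0 : 0 < a := by linarith
  have hpos : ∀ x, a < x → 0 < μ ^ 2 / 2 * x ^ (-2 : ℤ) := fun x hx =>
    mul_pos (by positivity) (zpow_pos (ha0.trans hx) _)
  have hS := symbolBound_V2 ha hμ hV hVp hVa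
  refine ⟨a, ha0, fun x hx => (hpos x hx).trans_le (hVa x hx), fun k => ?_, ?_⟩
  · obtain ⟨C, hC⟩ := (hS k).abs_iteratedDeriv_le
    refine ⟨|C| + 1, by positivity, fun h hh x hx => (hC ⟨h, hh⟩ x hx).trans ?_⟩
    rw [← Real.rpow_intCast]
    push_cast
    exact mul_le_mul_of_nonneg_right (by linarith [le_abs_self C])
      (Real.rpow_nonneg (ha0.trans hx).le _)
  · obtain ⟨C, hC⟩ := (hS 0).bound
    set s := Real.sqrt (μ ^ 2 / 2) with hs
    have hs0 : 0 < s := Real.sqrt_pos.2 (by positivity)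
    refine ⟨(|C| + 1) / s / a, by positivity, fun h hh x hx => ?_⟩
    refine integral_le_div_of_le_inv_sq ha0 (by positivity) hx (fun y _ => by positivity)
      fun y hy => ?_
    have hy0 : 0 < y := ha0.trans hy
    have hV0 : μ ^ 2 / 2 * y ^ (-2 : ℤ) ≤ V0 V h y := by
      have : 0 ≤ h ^ 2 / 4 * (1 + y ^ 2)⁻¹ := by positivity
      simp only [V0]
      linarith [hVa y hy]
    have hsq : s * y⁻¹ ≤ Real.sqrt (V0 V h y) := by
      refine Real.le_sqrt_of_sq_le (le_trans (le_of_eq ?_) hV0)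
      rw [mul_pow, hs, Real.sq_sqrt (by positivity), zpow_neg, zpow_ofNat, inv_pow]
    have hnum : |V2 V h y| ≤ (|C| + 1) * y ^ (-3 : ℤ) :=
      (hC ⟨h, hh⟩ y hy).trans (mul_le_mul_of_nonneg_right (by linarith [le_abs_self C])
        (zpow_pos hy0 _).le)
    calc |V2 V h y| / Real.sqrt (V0 V h y) ≤ (|C| + 1) * y ^ (-3 : ℤ) / (s * y⁻¹) :=
          div_le_div₀ (by positivity) hnum (by positivity) hsq
      _ = (|C| + 1) / s * y ^ (-2 : ℤ) := by
          simp only [zpow_neg, zpow_ofNat]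
          field_simp
end

section
/- If V > 0, there is no zero-energy resonance: if f : ℝ → ℝ is a twice continuously differentiable solution of −ℏ² f''(x) + V(x) f(x) = 0 which satisfies the subordinate growth bounds f(x) = O(|x|^{1/2 − α_±}) as x → ±∞, where α_± := √(1/4 + μ_±² ℏ^{-2}) > 1/2, then f is identically zero. -/
open Filter Topology

/-- A nonnegative convex function on `ℝ` tending to `0` at both ends vanishes. -/
theorem ConvexOn.eq_zero_of_tendsto_zero {g : ℝ → ℝ} (hg : ConvexOn ℝ Set.univ g)
    (hnonneg : ∀ x, 0 ≤ g x) (htop : Tendsto g atTop (𝓝 0)) (hbot : Tendsto g atBot (𝓝 0))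
    (x : ℝ) : g x = 0 := by
  refine le_antisymm ?_ (hnonneg x)
  have hlim : Tendsto (fun t ↦ (1 / 2 : ℝ) * g (x - t) + (1 / 2 : ℝ) * g (x + t)) atTop (𝓝 0) := by
    have hleft := hbot.comp (tendsto_atBot_add_const_left atTop x tendsto_neg_atTop_atBot)
    have hright := htop.comp (tendsto_atTop_add_const_left atTop x tendsto_id)
    simpa [Function.comp_def, sub_eq_add_neg] using
      (hleft.const_mul (1 / 2 : ℝ)).add (hright.const_mul (1 / 2 : ℝ))
  refine ge_of_tendsto' hlim fun t ↦ ?_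
  have hmid := hg.2 (Set.mem_univ (x - t)) (Set.mem_univ (x + t))
    (by norm_num : (0 : ℝ) ≤ 1 / 2) (by norm_num : (0 : ℝ) ≤ 1 / 2) (by norm_num)
  simp only [smul_eq_mul] at hmid
  rwa [show (1 / 2 : ℝ) * (x - t) + 1 / 2 * (x + t) = x by ring] at hmid

/-- The square of a `C²` function `f` with `f * f'' ≥ 0` is convex. -/
theorem convexOn_sq_of_mul_deriv2_nonneg {f : ℝ → ℝ} (hf : ContDiff ℝ 2 f)
    (hnonneg : ∀ x, 0 ≤ f x * deriv (deriv f) x) :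
    ConvexOn ℝ Set.univ fun x ↦ f x ^ 2 := by
  have hf₁ : Differentiable ℝ f := hf.differentiable (by norm_num)
  have hf₂ : Differentiable ℝ (deriv f) :=
    (hf.iterate_deriv' 1 1).differentiable (by norm_num)
  have hderiv : deriv (fun x ↦ f x ^ 2) = fun x ↦ 2 * f x * deriv f x := by
    funext x
    simpa using ((hf₁ x).hasDerivAt.fun_pow 2).deriv
  have hderiv₂ (x : ℝ) : HasDerivAt (fun x ↦ 2 * f x * deriv f x)
      (2 * deriv f x * deriv f x + 2 * f x * deriv (deriv f) x) x :=
    ((hf₁ x).hasDerivAt.const_mul 2).mul (hf₂ x).hasDerivAt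
  refine convexOn_univ_of_deriv2_nonneg (hf₁.pow 2) ?_ fun x ↦ ?_
  · rw [hderiv]
    exact fun x ↦ (hderiv₂ x).differentiableAt
  · rw [Function.iterate_succ, Function.iterate_one, Function.comp_apply, hderiv, (hderiv₂ x).deriv]
    nlinarith [hnonneg x, sq_nonneg (deriv f x)]

/-- The exponent `1/2 - √(1/4 + μ²/ℏ²)` of the subordinate solution is negative. -/
theorem half_sub_sqrt_quarter_add_neg {μ h : ℝ} (hμ : μ ≠ 0) (hh : 0 < h) :
    (1 : ℝ) / 2 - Real.sqrt (1 / 4 + μ ^ 2 / h ^ 2) < 0 := by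
  have hpos : 0 < μ ^ 2 / h ^ 2 := by positivity
  have : (1 : ℝ) / 2 < Real.sqrt (1 / 4 + μ ^ 2 / h ^ 2) :=
    Real.lt_sqrt_of_sq_lt (by linarith)
  linarith

theorem tendsto_const_mul_rpow_atTop_of_neg (C : ℝ) {p : ℝ} (hp : p < 0) :
    Tendsto (fun x : ℝ ↦ C * x ^ p) atTop (𝓝 0) := by
  simpa using (tendsto_rpow_neg_atTop (neg_pos.2 hp)).const_mul C

/-- if `V > 0` there is no zero-energy resonance: any `C²` solution of
`−ℏ²f'' + Vf = 0` which is subordinate at both ends, i.e. `f(x) = O(|x|^{1/2−α_±})` as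
`x → ±∞` with `α_± = √(1/4 + μ_±²ℏ⁻²) > 1/2`, vanishes identically. -/
theorem no_zero_energy_resonance
    (V : ℝ → ℝ) (μp μm h : ℝ) (hh : 0 < h)
    (hVcont : Continuous V) (hVpos : ∀ x, 0 < V x)
    (hμp : μp ≠ 0) (hμm : μm ≠ 0)
    (hVp : ∃ C > 0, ∀ x : ℝ, 1 ≤ x → |V x - μp ^ 2 / x ^ 2| ≤ C * x ^ (-3 : ℝ))
    (hVm : ∃ C > 0, ∀ x : ℝ, x ≤ -1 → |V x - μm ^ 2 / x ^ 2| ≤ C * |x| ^ (-3 : ℝ))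
    (f : ℝ → ℝ) (hf : ContDiff ℝ 2 f)
    (hode : ∀ x, -h ^ 2 * deriv (deriv f) x + V x * f x = 0)
    (hsubp : ∃ C > 0, ∀ x : ℝ, 1 ≤ x →
      |f x| ≤ C * x ^ ((1 : ℝ) / 2 - Real.sqrt (1 / 4 + μp ^ 2 / h ^ 2)))
    (hsubm : ∃ C > 0, ∀ x : ℝ, x ≤ -1 →
      |f x| ≤ C * |x| ^ ((1 : ℝ) / 2 - Real.sqrt (1 / 4 + μm ^ 2 / h ^ 2))) :
    ∀ x, f x = 0 := by
  obtain ⟨Cp, -, hCp⟩ := hsubp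
  obtain ⟨Cm, -, hCm⟩ := hsubm
  have htop : Tendsto f atTop (𝓝 0) :=
    squeeze_zero_norm' ((eventually_ge_atTop 1).mono hCp)
      (tendsto_const_mul_rpow_atTop_of_neg Cp (half_sub_sqrt_quarter_add_neg hμp hh))
  have hbot : Tendsto f atBot (𝓝 0) :=
    squeeze_zero_norm' ((eventually_le_atBot (-1)).mono hCm)
      ((tendsto_const_mul_rpow_atTop_of_neg Cm (half_sub_sqrt_quarter_add_neg hμm hh)).comp
        tendsto_abs_atBot_atTop)
  have hconv : ConvexOn ℝ Set.univ fun x ↦ f x ^ 2 := by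
    refine convexOn_sq_of_mul_deriv2_nonneg hf fun x ↦ ?_
    have hmul : h ^ 2 * (f x * deriv (deriv f) x) = V x * f x ^ 2 := by
      linear_combination (-f x) * hode x
    refine nonneg_of_mul_nonneg_right ?_ (pow_pos hh 2)
    rw [hmul]
    exact mul_nonneg (hVpos x).le (sq_nonneg _)
  intro x
  exact pow_eq_zero_iff two_ne_zero |>.1 <|
    hconv.eq_zero_of_tendsto_zero (fun y ↦ sq_nonneg (f y)) (by simpa using htop.pow 2)
      (by simpa using hbot.pow 2) x
end

section
/- There exists E₀ = E₀(V) > 0 such that for all 0 < E < E₀ the following hold: the equation V₀(x;ℏ) − E = 0 has a unique solution x₁ = x₁(E;ℏ) on x > 0, and this zero is simple. With Q₀(x) := V₀(x;ℏ) − E, the function ζ(x,E;ℏ) := sign(x − x₁) | (3/2) ∫_{x₁}^{x} √|Q₀(u)| du |^{2/3} defines a smooth change of variables on x ≥ 0 (smooth also across x = x₁); the function q := −Q₀/ζ is positive; dζ/dx = √q; and if f solves −ℏ² f'' + (V − E) f = 0, then w(ζ) := q^{1/4} f, regarded as a function of ζ, solves the perturbed Airy equation −ℏ² d²w/dζ²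 = (ζ + ℏ² Ṽ(ζ,E;ℏ)) w, where Ṽ := (1/4) q^{-1} ⟨x⟩^{-2} − q^{-1/4} d²(q^{1/4})/dζ². -/
open Set Filter Topology
open scoped ContDiff

theorem Convex.add_mul_sub_mem {U : Set ℝ} (hU : Convex ℝ U) {c x s : ℝ} (hc : c ∈ U)
    (hx : x ∈ U) (hs : s ∈ Icc (0 : ℝ) 1) : c + s * (x - c) ∈ U := by
  simpa using hU.add_smul_sub_mem hc hx hs

theorem continuousOn_segment_integrand {U : Set ℝ} (hU : Convex ℝ U) {c : ℝ} (hc : c ∈ U)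
    {w φ : ℝ → ℝ} (hw : Continuous w) (hφ : ContinuousOn φ U) {x : ℝ} (hx : x ∈ U) :
    ContinuousOn (fun s => w s * φ (c + s * (x - c))) (Icc 0 1) :=
  hw.continuousOn.mul (hφ.comp (by fun_prop) fun _ hs => hU.add_mul_sub_mem hc hx hs)

theorem hasDerivAt_integral_segment {U : Set ℝ} (hUo : IsOpen U) (hU : Convex ℝ U) {c : ℝ}
    (hc : c ∈ U) {w φ : ℝ → ℝ} (hw : Continuous w) (hφ : ContDiffOn ℝ 1 φ U) {x : ℝ}
    (hx : x ∈ U) :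
    HasDerivAt (fun x => ∫ s in (0 : ℝ)..1, w s * φ (c + s * (x - c)))
      (∫ s in (0 : ℝ)..1, (w s * s) * deriv φ (c + s * (x - c))) x := by
  obtain ⟨ε, hε, hball⟩ := Metric.nhds_basis_closedBall.mem_iff.1 (hUo.mem_nhds hx)
  have hφ' : ContinuousOn (deriv φ) U := hφ.continuousOn_deriv_of_isOpen hUo le_rfl
  have hmaps : MapsTo (fun p : ℝ × ℝ => c + p.1 * (p.2 - c))
      (Icc 0 1 ×ˢ Metric.closedBall x ε) U :=
    fun p hp => hU.add_mul_sub_mem hc (hball hp.2) hp.1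
  have hcont : ContinuousOn (fun p : ℝ × ℝ => (w p.1 * p.1) * deriv φ (c + p.1 * (p.2 - c)))
      (Icc 0 1 ×ˢ Metric.closedBall x ε) :=
    (by fun_prop : Continuous fun p : ℝ × ℝ => w p.1 * p.1).continuousOn.mul
      (hφ'.comp (by fun_prop) hmaps)
  obtain ⟨C, hC⟩ := (isCompact_Icc.prod (isCompact_closedBall x ε)).exists_bound_of_continuousOn
    hcont
  have hsub : uIoc (0 : ℝ) 1 ⊆ Icc 0 1 := by
    rw [uIoc_of_le zero_le_one]; exact Ioc_subset_Icc_self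
  have hmeas : ∀ {v ψ : ℝ → ℝ}, Continuous v → ContinuousOn ψ U → ∀ y ∈ U,
      MeasureTheory.AEStronglyMeasurable (fun s => v s * ψ (c + s * (y - c)))
        (MeasureTheory.volume.restrict (uIoc (0 : ℝ) 1)) := fun hv hψ y hy =>
    ((continuousOn_segment_integrand hU hc hv hψ hy).mono hsub).aestronglyMeasurable
      measurableSet_uIoc
  refine (intervalIntegral.hasDerivAt_integral_of_dominated_loc_of_deriv_le
    (F := fun x s => w s * φ (c + s * (x - c)))
    (F' := fun x s => (w s * s) * deriv φ (c + s * (x - c))) (bound := fun _ => C)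
    (Metric.closedBall_mem_nhds x hε) ?_ ?_ ?_ ?_ ?_ ?_).2
  · filter_upwards [hUo.mem_nhds hx] with y hy using hmeas hw hφ.continuousOn y hy
  · apply ContinuousOn.intervalIntegrable
    rw [uIcc_of_le zero_le_one]
    exact continuousOn_segment_integrand hU hc hw hφ.continuousOn hx
  · exact hmeas (by fun_prop) hφ' x hx
  · exact Eventually.of_forall fun s hs y hy => hC (s, y) ⟨hsub hs, hy⟩
  · exact intervalIntegrable_const
  · refine Eventually.of_forall fun s hs y hy => ?_
    have hmem := hU.add_mul_sub_mem hc (hball hy) (hsub hs)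
    have h1 : HasDerivAt φ (deriv φ (c + s * (y - c))) (c + s * (y - c)) :=
      ((hφ.differentiableOn one_ne_zero).differentiableAt (hUo.mem_nhds hmem)).hasDerivAt
    have h2 : HasDerivAt (fun y => c + s * (y - c)) s y := by
      simpa using (((hasDerivAt_id y).sub_const c).const_mul s).const_add c
    refine ((h1.comp y h2).const_mul (w s)).congr_deriv ?_
    ring

theorem contDiffOn_integral_segment {U : Set ℝ} (hUo : IsOpen U) (hU : Convex ℝ U) {c : ℝ}
    (hc : c ∈ U) {w φ : ℝ → ℝ} (hw : Continuous w) (hφ : ContDiffOn ℝ ∞ φ U) :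
    ContDiffOn ℝ ∞ (fun x => ∫ s in (0 : ℝ)..1, w s * φ (c + s * (x - c))) U := by
  rw [contDiffOn_infty]
  intro n
  induction n generalizing w φ with
  | zero =>
    exact contDiffOn_zero.2 fun x hx => (hasDerivAt_integral_segment hUo hU hc hw
      (hφ.of_le (by exact_mod_cast le_top)) hx).continuousAt.continuousWithinAt
  | succ n ih =>
    have hd : ∀ x ∈ U, HasDerivAt _ _ x := fun x hx => hasDerivAt_integral_segment hUo hU hc hw
      (hφ.of_le (by exact_mod_cast le_top)) hx
    push_cast
    rw [contDiffOn_succ_iff_deriv_of_isOpen hUo]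
    refine ⟨fun x hx => (hd x hx).differentiableAt.differentiableWithinAt, by simp, ?_⟩
    exact (ih (w := fun s => w s * s) (by fun_prop)
      ((contDiffOn_infty_iff_deriv_of_isOpen hUo).1 hφ).2).congr fun x hx => (hd x hx).deriv

theorem eq_sub_mul_integral_deriv {Q : ℝ → ℝ} (hQ : ContDiff ℝ 1 Q) {c : ℝ} (hQc : Q c = 0)
    (x : ℝ) : Q x = (x - c) * ∫ s in (0 : ℝ)..1, deriv Q (c + s * (x - c)) := by
  have h := intervalIntegral.smul_integral_comp_add_mul (a := 0) (b := 1) (deriv Q) (x - c) c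
  have h2 : (∫ u in c..x, deriv Q u) = Q x - Q c :=
    intervalIntegral.integral_deriv_eq_sub (fun u _ => (hQ.differentiable one_ne_zero) u)
      ((hQ.continuous_deriv le_rfl).intervalIntegrable _ _)
  simp only [smul_eq_mul, mul_zero, add_zero, mul_one, add_sub_cancel] at h
  rw [h2, hQc, sub_zero] at h
  rw [← h]
  simp only [mul_comm]

/-- Smooth division by a simple zero. -/
theorem exists_contDiff_factor {Q : ℝ → ℝ} (hQ : ContDiff ℝ ∞ Q) {c : ℝ} (hQc : Q c = 0) :
    ∃ g : ℝ → ℝ, ContDiff ℝ ∞ g ∧ g c = deriv Q c ∧ ∀ x, Q x = (x - c) * g x := by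
  refine ⟨fun x => ∫ s in (0 : ℝ)..1, 1 * deriv Q (c + s * (x - c)), ?_, by simp, ?_⟩
  · exact contDiffOn_univ.1 (contDiffOn_integral_segment isOpen_univ convex_univ (mem_univ c)
      continuous_const (contDiff_infty_iff_deriv.1 hQ).2.contDiffOn)
  · intro x
    simpa using eq_sub_mul_integral_deriv (hQ.of_le (by exact_mod_cast le_top)) hQc x

/-- The function `H` with `|x - c| ^ (1 / 2) * (x - c) * H x = (3 / 2) ∫ √|Q|` when
`Q = (x - c) p²`. -/
noncomputable def phaseFactor (c : ℝ) (p : ℝ → ℝ) (x : ℝ) : ℝ :=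
  ∫ s in (0 : ℝ)..1, (3 / 2 * √s) * p (c + s * (x - c))

section phaseFactor

variable {U : Set ℝ} {c : ℝ} {p : ℝ → ℝ}

theorem contDiffOn_phaseFactor (hUo : IsOpen U) (hU : Convex ℝ U) (hc : c ∈ U)
    (hp : ContDiffOn ℝ ∞ p U) : ContDiffOn ℝ ∞ (phaseFactor c p) U :=
  contDiffOn_integral_segment hUo hU hc (by fun_prop) hp

theorem phaseFactor_pos (hU : Convex ℝ U) (hc : c ∈ U) (hp : ContinuousOn p U)
    (hpos : ∀ x ∈ U, 0 < p x) {x : ℝ} (hx : x ∈ U) : 0 < phaseFactor c p x := by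
  refine intervalIntegral.intervalIntegral_pos_of_pos_on ?_ (fun s hs => ?_) zero_lt_one
  · apply ContinuousOn.intervalIntegrable
    rw [uIcc_of_le zero_le_one]
    exact continuousOn_segment_integrand hU hc (by fun_prop) hp hx
  · have := hpos _ (hU.add_mul_sub_mem hc hx (Ioo_subset_Icc_self hs))
    have := Real.sqrt_pos.2 hs.1
    positivity

theorem hasDerivAt_mul_sqrt {s : ℝ} (hs : 0 < s) :
    HasDerivAt (fun s => s * √s) (3 / 2 * √s) s := by
  refine ((hasDerivAt_id s).mul (Real.hasDerivAt_sqrt hs.ne')).congr_deriv ?_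
  have := Real.mul_self_sqrt hs.le
  have := Real.sqrt_pos.2 hs
  simp only [id]
  field_simp
  nlinarith

/-- Integration by parts gives the linear ODE `H + (2 / 3) (x - c) dH/dx = p`. -/
theorem exists_hasDerivAt_phaseFactor (hUo : IsOpen U) (hU : Convex ℝ U) (hc : c ∈ U)
    (hp : ContDiffOn ℝ ∞ p U) {x : ℝ} (hx : x ∈ U) :
    ∃ H', HasDerivAt (phaseFactor c p) H' x ∧
      phaseFactor c p x + 2 / 3 * (x - c) * H' = p x := by
  have hp1 : ContDiffOn ℝ 1 p U := hp.of_le (by exact_mod_cast le_top)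
  refine ⟨_, hasDerivAt_integral_segment hUo hU hc (by fun_prop) hp1 hx, ?_⟩
  have hp' : ContinuousOn (deriv p) U := hp1.continuousOn_deriv_of_isOpen hUo le_rfl
  have hi1 : IntervalIntegrable (fun s => (3 / 2 * √s) * p (c + s * (x - c)))
      MeasureTheory.volume 0 1 := by
    apply ContinuousOn.intervalIntegrable
    rw [uIcc_of_le zero_le_one]
    exact continuousOn_segment_integrand hU hc (by fun_prop) hp.continuousOn hx
  have hi2 : IntervalIntegrable (fun s => (3 / 2 * √s * s) * deriv p (c + s * (x - c)))
      MeasureTheory.volume 0 1 := by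
    apply ContinuousOn.intervalIntegrable
    rw [uIcc_of_le zero_le_one]
    exact continuousOn_segment_integrand hU hc (by fun_prop) hp' hx
  have key := intervalIntegral.integral_eq_sub_of_hasDerivAt_of_le (zero_le_one' ℝ)
    (f := fun s => (s * √s) * p (c + s * (x - c)))
    (f' := fun s => (3 / 2 * √s) * p (c + s * (x - c)) +
      2 / 3 * (x - c) * ((3 / 2 * √s * s) * deriv p (c + s * (x - c))))
    (continuousOn_segment_integrand hU hc (by fun_prop) hp.continuousOn hx) ?_
    (hi1.add (hi2.const_mul _))
  · rw [intervalIntegral.integral_add hi1 (hi2.const_mul _),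
      intervalIntegral.integral_const_mul] at key
    simpa [phaseFactor] using key
  · intro s hs
    have hmem := hU.add_mul_sub_mem hc hx (Ioo_subset_Icc_self hs)
    have h1 : HasDerivAt p (deriv p (c + s * (x - c))) (c + s * (x - c)) :=
      ((hp1.differentiableOn one_ne_zero).differentiableAt (hUo.mem_nhds hmem)).hasDerivAt
    have h2 : HasDerivAt (fun s => c + s * (x - c)) (x - c) s := by
      simpa using ((hasDerivAt_id s).mul_const (x - c)).const_add c
    refine ((hasDerivAt_mul_sqrt hs.1).mul (h1.comp s h2)).congr_deriv ?_
    simp only [Function.comp]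
    ring

theorem integral_sqrt_abs_eq_phaseFactor {Q : ℝ → ℝ} (hU : Convex ℝ U) (hc : c ∈ U)
    (hpos : ∀ x ∈ U, 0 < p x) (hQ : ∀ x ∈ U, Q x = (x - c) * p x ^ 2) {x : ℝ} (hx : x ∈ U) :
    3 / 2 * ∫ u in c..x, √|Q u| = (x - c) * √|x - c| * phaseFactor c p x := by
  have h := intervalIntegral.smul_integral_comp_add_mul (a := 0) (b := 1)
    (fun u => √|Q u|) (x - c) c
  simp only [smul_eq_mul, mul_zero, add_zero, mul_one, add_sub_cancel] at h
  have h2 : ∫ s in (0 : ℝ)..1, √|Q (c + (x - c) * s)| =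
      ∫ s in (0 : ℝ)..1, (2 / 3 * √|x - c|) * ((3 / 2 * √s) * p (c + s * (x - c))) := by
    refine intervalIntegral.integral_congr fun s hs => ?_
    rw [uIcc_of_le zero_le_one] at hs
    have hmem := hU.add_mul_sub_mem hc hx hs
    have hp := hpos _ hmem
    simp only [mul_comm (x - c) s, hQ _ hmem, add_sub_cancel_left]
    rw [abs_mul, abs_mul, abs_of_nonneg hs.1, abs_of_nonneg (sq_nonneg (p _)),
      Real.sqrt_mul (mul_nonneg hs.1 (abs_nonneg _)), Real.sqrt_mul hs.1, Real.sqrt_sq hp.le]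
    ring
  rw [← h, h2, intervalIntegral.integral_const_mul, phaseFactor]
  ring

/-- The Liouville–Green variable equals `(x - c) H ^ (2 / 3)`. -/
theorem sign_mul_rpow_eq_phaseFactor {Q : ℝ → ℝ} (hU : Convex ℝ U) (hc : c ∈ U)
    (hpc : ContinuousOn p U)
    (hpos : ∀ x ∈ U, 0 < p x) (hQ : ∀ x ∈ U, Q x = (x - c) * p x ^ 2) {x : ℝ} (hx : x ∈ U) :
    Real.sign (x - c) * abs (3 / 2 * ∫ u in c..x, √|Q u|) ^ ((2 : ℝ) / 3) =
      (x - c) * phaseFactor c p x ^ ((2 : ℝ) / 3) := by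
  have hH := phaseFactor_pos hU hc hpc hpos hx
  have h3 : (|x - c| * √|x - c|) ^ ((2 : ℝ) / 3) = |x - c| := by
    have : |x - c| * √|x - c| = |x - c| ^ ((3 : ℝ) / 2) := by
      rw [Real.sqrt_eq_rpow, ← Real.rpow_one_add' (abs_nonneg _) (by norm_num)]
      norm_num
    rw [this, ← Real.rpow_mul (abs_nonneg _)]
    norm_num
  rw [integral_sqrt_abs_eq_phaseFactor hU hc hpos hQ hx, abs_mul, abs_mul, abs_of_pos hH,
    abs_of_nonneg (Real.sqrt_nonneg _), Real.mul_rpow (by positivity) hH.le, h3, ← mul_assoc]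
  congr 1
  rcases lt_trichotomy (x - c) 0 with h | h | h
  · rw [Real.sign_of_neg h, abs_of_neg h]; ring
  · simp [h]
  · rw [Real.sign_of_pos h, abs_of_pos h]; ring

theorem hasDerivAt_sub_mul_phaseFactor_rpow (hUo : IsOpen U) (hU : Convex ℝ U) (hc : c ∈ U)
    (hp : ContDiffOn ℝ ∞ p U) (hpos : ∀ x ∈ U, 0 < p x) {x : ℝ} (hx : x ∈ U) :
    HasDerivAt (fun x => (x - c) * phaseFactor c p x ^ ((2 : ℝ) / 3))
      (√(p x ^ 2 / phaseFactor c p x ^ ((2 : ℝ) / 3))) x := by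
  obtain ⟨H', hH', hode⟩ := exists_hasDerivAt_phaseFactor hUo hU hc hp hx
  have hH := phaseFactor_pos hU hc hp.continuousOn hpos hx
  set H := phaseFactor c p x
  have hr : √(H ^ ((2 : ℝ) / 3)) = H ^ ((1 : ℝ) / 3) := by
    rw [Real.sqrt_eq_rpow, ← Real.rpow_mul hH.le]
    norm_num
  rw [Real.sqrt_div (sq_nonneg _), Real.sqrt_sq (hpos x hx).le, hr]
  refine (((hasDerivAt_id x).sub_const c).mul
    (hH'.rpow_const (p := (2 : ℝ) / 3) (Or.inl hH.ne'))).congr_deriv ?_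
  have h1 : H ^ ((2 : ℝ) / 3) = H / H ^ ((1 : ℝ) / 3) := by
    rw [eq_div_iff (by positivity), ← Real.rpow_add hH]
    norm_num
  have h2 : H ^ ((2 : ℝ) / 3 - 1) = (H ^ ((1 : ℝ) / 3))⁻¹ := by
    rw [← Real.rpow_neg hH.le]
    norm_num
  change 1 * H ^ ((2 : ℝ) / 3) + (x - c) * (H' * (2 / 3) * H ^ ((2 : ℝ) / 3 - 1)) = _
  rw [h1, h2, ← hode]
  field_simp

end phaseFactor

section LiouvilleGreen

variable {S : Set ℝ} {ζ xinv a : ℝ → ℝ}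

theorem HasStrictDerivAt.comp_leftInverse (hS : IsOpen S) (ha : ∀ x ∈ S, 0 < a x)
    (hζ : ∀ x ∈ S, HasStrictDerivAt ζ (a x ^ 2) x) (hinv : ∀ x ∈ S, xinv (ζ x) = x)
    {φ : ℝ → ℝ} {φ' x : ℝ} (hx : x ∈ S) (hφ : HasDerivAt φ φ' x) :
    HasDerivAt (fun z => φ (xinv z)) (φ' / a x ^ 2) (ζ x) := by
  have h := ((hζ x hx).to_local_left_inverse (pow_pos (ha x hx) 2).ne' (g := xinv)
    (by filter_upwards [hS.mem_nhds hx] with y hy using hinv y hy)).hasDerivAt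
  exact HasDerivAt.comp (h₂ := φ) (ζ x) (by rwa [hinv x hx]) h

theorem deriv_deriv_comp_leftInverse (hS : IsOpen S) (ha : ∀ x ∈ S, 0 < a x)
    (hζ : ∀ x ∈ S, HasStrictDerivAt ζ (a x ^ 2) x) (hinv : ∀ x ∈ S, xinv (ζ x) = x)
    {φ φ' : ℝ → ℝ} {D x : ℝ} (hx : x ∈ S) (hφ : ∀ y ∈ S, HasDerivAt φ (φ' y) y)
    (hD : HasDerivAt (fun y => φ' y / a y ^ 2) D x) :
    deriv (deriv (fun z => φ (xinv z))) (ζ x) = D / a x ^ 2 := by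
  have hev : deriv (fun z => φ (xinv z)) =ᶠ[𝓝 (ζ x)] fun z => φ' (xinv z) / a (xinv z) ^ 2 := by
    have hmap := (hζ x hx).map_nhds_eq (pow_pos (ha x hx) 2).ne'
    rw [← hmap, EventuallyEq, eventually_map]
    filter_upwards [hS.mem_nhds hx] with y hy
    rw [hinv y hy, (HasStrictDerivAt.comp_leftInverse hS ha hζ hinv hy (hφ y hy)).deriv]
  rw [hev.deriv_eq]
  exact (HasStrictDerivAt.comp_leftInverse hS ha hζ hinv hx hD).deriv

/-- The Liouville transformation: for `dζ/dx = a²`, the first-order terms cancel in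
`d²(a f)/dζ² = (d²a/dζ²) f + a⁻³ d²f/dx²`. -/
theorem deriv_deriv_liouville (hS : IsOpen S) (ha : ∀ x ∈ S, 0 < a x)
    (has : ContDiffOn ℝ 2 a S) (hζ : ∀ x ∈ S, HasStrictDerivAt ζ (a x ^ 2) x)
    (hinv : ∀ x ∈ S, xinv (ζ x) = x) {f f' f'' : ℝ → ℝ} (hf : ∀ x, HasDerivAt f (f' x) x)
    (hf' : ∀ x, HasDerivAt f' (f'' x) x) {x : ℝ} (hx : x ∈ S) :
    deriv (deriv (fun z => a (xinv z) * f (xinv z))) (ζ x) =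
      deriv (deriv (fun z => a (xinv z))) (ζ x) * f x + f'' x / a x ^ 3 := by
  have ha1 : ∀ y ∈ S, HasDerivAt a (deriv a y) y := fun y hy =>
    ((has.differentiableOn two_ne_zero).differentiableAt (hS.mem_nhds hy)).hasDerivAt
  have ha2 : DifferentiableAt ℝ (deriv a) x :=
    (((contDiffOn_succ_iff_deriv_of_isOpen (n := 1) hS).1 has).2.2.differentiableOn
      one_ne_zero).differentiableAt (hS.mem_nhds hx)
  have hax := ha x hx
  obtain ⟨b', hb'⟩ : ∃ b', HasDerivAt (fun y => deriv a y / a y ^ 2) b' x :=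
    ⟨_, (ha2.div ((ha1 x hx).differentiableAt.pow 2) (pow_pos hax 2).ne').hasDerivAt⟩
  rw [deriv_deriv_comp_leftInverse hS ha hζ hinv hx ha1 hb',
    deriv_deriv_comp_leftInverse (φ := fun y => a y * f y)
      (φ' := fun y => deriv a y * f y + a y * f' y) (D := b' * f x + (a x)⁻¹ * f'' x)
      hS ha hζ hinv hx (fun y hy => (ha1 y hy).mul (hf y))]
  · field_simp
  · have h1 : HasDerivAt (fun y => deriv a y / a y ^ 2 * f y + (a y)⁻¹ * f' y)
        (b' * f x + (a x)⁻¹ * f'' x) x := by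
      refine ((hb'.mul (hf x)).add (((ha1 x hx).inv hax.ne').mul (hf' x))).congr_deriv ?_
      simp only [Pi.inv_apply]
      ring
    refine h1.congr_of_eventuallyEq ?_
    filter_upwards [hS.mem_nhds hx] with y hy
    have := ha y hy
    field_simp

end LiouvilleGreen

section TurningPoint

variable {V : ℝ → ℝ} {μ : ℝ}

theorem exists_deriv_neg_of_inverse_square (hV : Differentiable ℝ V) (hμ : μ ≠ 0) {C : ℝ}
    (hC : 0 < C)
    (hd : ∀ x : ℝ, 1 ≤ x → |deriv (fun t => V t - μ ^ 2 / t ^ 2) x| ≤ C / x ^ 4) :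
    ∃ R > 0, ∀ x, R ≤ x → deriv V x < 0 := by
  have hμ2 : 0 < μ ^ 2 := by positivity
  refine ⟨1 + C / μ ^ 2, by positivity, fun x hx => ?_⟩
  have hx1 : 1 ≤ x := le_trans (by linarith [div_pos hC hμ2]) hx
  have hx0 : 0 < x := by linarith
  have hderiv : HasDerivAt (fun t => V t - μ ^ 2 / t ^ 2) (deriv V x + 2 * μ ^ 2 / x ^ 3) x := by
    refine ((hV x).hasDerivAt.sub
      ((hasDerivAt_const x (μ ^ 2)).div (hasDerivAt_pow 2 x) (by positivity))).congr_deriv ?_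
    field_simp
    ring
  have h1 := (abs_le.1 (hd x hx1)).2
  rw [hderiv.deriv] at h1
  have h2 : C < μ ^ 2 * x := by
    have : C / μ ^ 2 < x := by linarith
    rwa [div_lt_iff₀' hμ2] at this
  have h3 : C / x ^ 4 < 2 * μ ^ 2 / x ^ 3 := by
    rw [div_lt_div_iff₀ (by positivity) (by positivity)]
    have : 0 < x ^ 3 := by positivity
    nlinarith [mul_pos hμ2 hx0]
  linarith

theorem tendsto_zero_of_inverse_square {C : ℝ}
    (hd : ∀ x : ℝ, 1 ≤ x → |V x - μ ^ 2 / x ^ 2| ≤ C / x ^ 3) : Tendsto V atTop (𝓝 0) := by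
  have h1 : Tendsto (fun x : ℝ => μ ^ 2 / x ^ 2) atTop (𝓝 0) :=
    tendsto_const_nhds.div_atTop (tendsto_pow_atTop two_ne_zero)
  have h2 : Tendsto (fun x : ℝ => C / x ^ 3) atTop (𝓝 0) :=
    tendsto_const_nhds.div_atTop (tendsto_pow_atTop three_ne_zero)
  have h3 : Tendsto (fun x => V x - μ ^ 2 / x ^ 2) atTop (𝓝 0) := by
    refine squeeze_zero_norm' ?_ h2
    filter_upwards [eventually_ge_atTop 1] with x hx using hd x hx
  simpa using h3.add h1

theorem hasDerivAt_V0 (hV : Differentiable ℝ V) (h x : ℝ) :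
    HasDerivAt (V0 V h) (deriv V x - h ^ 2 / 2 * x / (1 + x ^ 2) ^ 2) x := by
  have h0 : (1 + x ^ 2) ≠ 0 := by positivity
  refine ((hV x).hasDerivAt.add
    ((((hasDerivAt_pow 2 x).const_add 1).inv h0).const_mul (h ^ 2 / 4))).congr_deriv ?_
  field_simp
  ring

theorem contDiff_V0 (hV : ContDiff ℝ ∞ V) (h : ℝ) : ContDiff ℝ ∞ (V0 V h) :=
  hV.add (contDiff_const.mul ((contDiff_const.add (contDiff_id.pow 2)).inv
    fun x => by simp only [id]; positivity))

theorem tendsto_V0 (hV : Tendsto V atTop (𝓝 0)) (h : ℝ) : Tendsto (V0 V h) atTop (𝓝 0) := by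
  have h1 : Tendsto (fun x : ℝ => (1 + x ^ 2)⁻¹) atTop (𝓝 0) :=
    (tendsto_atTop_add_const_left _ 1 (tendsto_pow_atTop two_ne_zero)).inv_tendsto_atTop
  have h2 := hV.add (h1.const_mul (h ^ 2 / 4))
  rwa [mul_zero, add_zero] at h2

/-- Small energies have exactly one turning point on the right half-line, and it is simple. -/
theorem exists_turning_point (hV : ContDiff ℝ ∞ V) (hVpos : ∀ x, 0 < V x)
    (hlim : Tendsto V atTop (𝓝 0)) {R : ℝ} (hR : 0 < R) (hneg : ∀ x, R ≤ x → deriv V x < 0) :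
    ∃ E₀ > 0, ∀ h : ℝ, ∀ E ∈ Ioo 0 E₀, ∃ c > 0, V0 V h c = E ∧ deriv (V0 V h) c < 0 ∧
      (∀ x ∈ Ico 0 c, E < V0 V h x) ∧ ∀ x, c < x → V0 V h x < E := by
  have hVd : Differentiable ℝ V := hV.differentiable (by simp)
  obtain ⟨m, -, hmin⟩ := isCompact_Icc.exists_isMinOn (nonempty_Icc.2 hR.le)
    hV.continuous.continuousOn
  refine ⟨V m, hVpos m, fun h E hE => ?_⟩
  have hlow : ∀ x ∈ Icc 0 R, E < V0 V h x := fun x hx => by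
    have h1 : V m ≤ V x := hmin hx
    have h2 : 0 ≤ h ^ 2 / 4 * (1 + x ^ 2)⁻¹ := by positivity
    simp only [V0]
    linarith [hE.2]
  have hcont : Continuous (V0 V h) := (contDiff_V0 hV h).continuous
  have hd : ∀ x, R ≤ x → deriv (V0 V h) x < 0 := fun x hx => by
    rw [(hasDerivAt_V0 hVd h x).deriv]
    have : 0 < x := hR.trans_le hx
    have : 0 ≤ h ^ 2 / 2 * x / (1 + x ^ 2) ^ 2 := by positivity
    linarith [hneg x hx]
  have hanti : StrictAntiOn (V0 V h) (Ici R) :=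
    strictAntiOn_of_deriv_neg (convex_Ici R) hcont.continuousOn
      fun x hx => hd x (interior_subset hx)
  obtain ⟨y, hy, hyR⟩ :=
    (((tendsto_V0 hlim h).eventually_lt_const hE.1).and (eventually_ge_atTop R)).exists
  obtain ⟨c, hc, hcE⟩ := intermediate_value_Icc' hyR hcont.continuousOn
    ⟨hy.le, (hlow R ⟨hR.le, le_rfl⟩).le⟩
  refine ⟨c, hR.trans_le hc.1, hcE, hd c hc.1, fun x hx => ?_, fun x hx => ?_⟩
  · rcases le_total x R with hxR | hxR
    · exact hlow x ⟨hx.1, hxR⟩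
    · exact hcE ▸ hanti hxR hc.1 hx.2
  · exact hcE ▸ hanti hc.1 (hc.1.trans hx.le) hx

end TurningPoint

/-- there is `E₀ > 0` so that for `0 < E < E₀` the equation `V₀ = E` has a
unique simple zero `x₁ > 0`,
`ζ(x) = sign(x−x₁)|(3/2)∫_{x₁}^x √|V₀−E| du|^{2/3}` is a smooth change of variables on
`x ≥ 0` with `q = −(V₀−E)/ζ > 0`, `dζ/dx = √q`, and any solution `f` of
`−ℏ²f'' + (V−E)f = 0` transforms under `w = q^{1/4}f` (as a function of `ζ`) into a
solution of the perturbed Airy equation `−ℏ²ẅ = (ζ + ℏ²Ṽ(ζ))w` with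
`Ṽ = (1/4)q⁻¹⟨x⟩⁻² − q^{-1/4} d²(q^{1/4})/dζ²`. -/
theorem liouville_green_transform
    (V : ℝ → ℝ) (μp μm : ℝ)
    (hVsmooth : ∀ n : ℕ, ContDiff ℝ n V)
    (hVpos : ∀ x, 0 < V x)
    (hμp : μp ≠ 0) (hμm : μm ≠ 0)
    (hVp : ∀ k : ℕ, ∃ C > 0, ∀ x : ℝ, 1 ≤ x →
      |iteratedDeriv k (fun t => V t - μp ^ 2 / t ^ 2) x| ≤ C * x ^ (-3 - k : ℝ))
    (hVm : ∀ k : ℕ, ∃ C > 0, ∀ x : ℝ, x ≤ -1 →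
      |iteratedDeriv k (fun t => V t - μm ^ 2 / t ^ 2) x| ≤ C * |x| ^ (-3 - k : ℝ)) :
    ∃ E₀ > 0, ∀ h ∈ Set.Ioo (0 : ℝ) 1, ∀ E ∈ Set.Ioo 0 E₀,
      ∃ x₁ : ℝ, ∃ ζ q xinv Vt : ℝ → ℝ,
        -- unique simple turning point on x > 0
        0 < x₁ ∧ V0 V h x₁ = E ∧ (∀ x, 0 < x → V0 V h x = E → x = x₁) ∧
        deriv (V0 V h) x₁ ≠ 0 ∧
        -- the Liouville–Green variable
        (∀ x, ζ x = Real.sign (x - x₁) *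
          (abs ((3 : ℝ) / 2 * ∫ u in x₁..x, Real.sqrt |V0 V h u - E|)) ^ ((2 : ℝ) / 3)) ∧
        -- smooth change of variables on x ≥ 0
        (∀ n : ℕ, ContDiffOn ℝ n ζ (Set.Ici 0)) ∧
        StrictMonoOn ζ (Set.Ici 0) ∧
        -- q = −(V₀−E)/ζ extends positively across the turning point, and ζ' = √q
        (∀ x ∈ Set.Ici (0 : ℝ), 0 < q x) ∧
        (∀ x ∈ Set.Ici (0 : ℝ), x ≠ x₁ → q x = -(V0 V h x - E) / ζ x) ∧
        (∀ x ∈ Set.Ici (0 : ℝ), HasDerivAt ζ (Real.sqrt (q x)) x) ∧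
        -- xinv inverts ζ on x ≥ 0
        (∀ x ∈ Set.Ici (0 : ℝ), xinv (ζ x) = x) ∧
        -- Ṽ(ζ) = (1/4)q⁻¹⟨x⟩⁻² − q^{-1/4} d²(q^{1/4})/dζ²
        (∀ x ∈ Set.Ioi (0 : ℝ), Vt (ζ x) =
          1 / 4 * (q x)⁻¹ * (1 + x ^ 2)⁻¹
            - q x ^ (-(1 : ℝ) / 4) *
              deriv (deriv (fun z => q (xinv z) ^ ((1 : ℝ) / 4))) (ζ x)) ∧
        -- the transformed equation: −ℏ² ẅ = (ζ + ℏ²Ṽ(ζ)) w with w = q^{1/4} f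
        (∀ f f' f'' : ℝ → ℝ,
          (∀ x, HasDerivAt f (f' x) x) → (∀ x, HasDerivAt f' (f'' x) x) →
          (∀ x, -h ^ 2 * f'' x + (V x - E) * f x = 0) →
          ∀ x ∈ Set.Ioi (0 : ℝ),
            -h ^ 2 * deriv (deriv (fun z => q (xinv z) ^ ((1 : ℝ) / 4) * f (xinv z))) (ζ x)
              = (ζ x + h ^ 2 * Vt (ζ x)) * (q x ^ ((1 : ℝ) / 4) * f x)) := by
  have hV : ContDiff ℝ ∞ V := contDiff_infty.2 hVsmooth
  have hlim : Tendsto V atTop (𝓝 0) := by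
    obtain ⟨C, -, hC⟩ := hVp 0
    refine tendsto_zero_of_inverse_square (μ := μp) (C := C) fun x hx => (hC x hx).trans_eq ?_
    rw [show (-3 - (0 : ℕ) : ℝ) = -((3 : ℕ) : ℝ) by norm_num, Real.rpow_neg (by linarith),
      Real.rpow_natCast, div_eq_mul_inv]
  obtain ⟨R, hR, hneg⟩ : ∃ R > 0, ∀ x, R ≤ x → deriv V x < 0 := by
    obtain ⟨C, hC0, hC⟩ := hVp 1
    refine exists_deriv_neg_of_inverse_square (hV.differentiable (by simp)) hμp hC0
      fun x hx => ?_
    rw [← iteratedDeriv_one]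
    refine (hC x hx).trans_eq ?_
    rw [show (-3 - (1 : ℕ) : ℝ) = -((4 : ℕ) : ℝ) by norm_num, Real.rpow_neg (by linarith),
      Real.rpow_natCast, div_eq_mul_inv]
  obtain ⟨E₀, hE₀, hturn⟩ := exists_turning_point hV hVpos hlim hR hneg
  refine ⟨E₀, hE₀, fun h _ E hE => ?_⟩
  obtain ⟨c, hc0, hcE, hcd, hleft, hright⟩ := hturn h E hE
  have hQ : ContDiff ℝ ∞ (fun x => E - V0 V h x) := contDiff_const.sub (contDiff_V0 hV h)
  obtain ⟨g, hg, hgc, hQg⟩ := exists_contDiff_factor hQ (c := c) (by simp [hcE])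
  have hgpos : ∀ x, 0 ≤ x → 0 < g x := by
    intro x hx
    rcases lt_trichotomy x c with hxc | rfl | hxc
    · have := hleft x ⟨hx, hxc⟩
      have := hQg x
      exact pos_of_mul_neg_right (by linarith : (x - c) * g x < 0) (by linarith)
    · rw [hgc, deriv_const_sub]
      linarith
    · have := hright x hxc
      have := hQg x
      exact pos_of_mul_pos_right (by linarith : 0 < (x - c) * g x) (by linarith)
  obtain ⟨δ, hδ, hball⟩ := Metric.eventually_nhds_iff_ball.1
    (hg.continuous.continuousAt.eventually (lt_mem_nhds (hgpos 0 le_rfl)))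
  have hgU : ∀ x ∈ Ioi (-δ), 0 < g x := fun x hx => by
    rcases le_or_gt 0 x with hx0 | hx0
    · exact hgpos x hx0
    · exact hball x (by rw [mem_ball_zero_iff, Real.norm_eq_abs, abs_of_neg hx0]; linarith [hx.out])
  set U := Ioi (-δ)
  have hUo : IsOpen U := isOpen_Ioi
  have hU : Convex ℝ U := convex_Ioi _
  have hsub : Ici (0 : ℝ) ⊆ U := fun x hx => lt_of_lt_of_le (neg_lt_zero.2 hδ) hx
  have hcU : c ∈ U := hsub hc0.le
  set p : ℝ → ℝ := fun x => √(g x) with hpdef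
  have hp : ContDiffOn ℝ ∞ p U := hg.contDiffOn.sqrt fun x hx => (hgU x hx).ne'
  have hpos : ∀ x ∈ U, 0 < p x := fun x hx => Real.sqrt_pos.2 (hgU x hx)
  have hQp : ∀ x ∈ U, E - V0 V h x = (x - c) * p x ^ 2 := fun x hx => by
    rw [hpdef, Real.sq_sqrt (hgU x hx).le, hQg]
  have hH := contDiffOn_phaseFactor hUo hU hcU hp
  have hHpos : ∀ x ∈ U, 0 < phaseFactor c p x := fun x hx =>
    phaseFactor_pos hU hcU hp.continuousOn hpos hx
  have hHr : ContDiffOn ℝ ∞ (fun x => phaseFactor c p x ^ ((2 : ℝ) / 3)) U :=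
    hH.rpow_const_of_ne fun x hx => (hHpos x hx).ne'
  obtain ⟨ζ, hζdef⟩ : ∃ ζ : ℝ → ℝ, ∀ x, ζ x = Real.sign (x - c) *
      (abs ((3 : ℝ) / 2 * ∫ u in c..x, √|V0 V h u - E|)) ^ ((2 : ℝ) / 3) := ⟨_, fun _ => rfl⟩
  have hζ : ∀ x ∈ U, ζ x = (x - c) * phaseFactor c p x ^ ((2 : ℝ) / 3) := fun x hx => by
    rw [← sign_mul_rpow_eq_phaseFactor hU hcU hp.continuousOn hpos hQp hx, hζdef]
    simp only [abs_sub_comm E]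
  have hζs : ContDiffOn ℝ ∞ ζ U := ((contDiff_id.sub contDiff_const).contDiffOn.mul hHr).congr hζ
  set q : ℝ → ℝ := fun x => p x ^ 2 / phaseFactor c p x ^ ((2 : ℝ) / 3) with hqdef
  have hqpos : ∀ x ∈ U, 0 < q x := fun x hx =>
    div_pos (pow_pos (hpos x hx) 2) (Real.rpow_pos_of_pos (hHpos x hx) _)
  have hqζ : ∀ x ∈ U, q x * ζ x = E - V0 V h x := fun x hx => by
    have := Real.rpow_pos_of_pos (hHpos x hx) ((2 : ℝ) / 3)
    rw [hζ x hx, hQp x hx, hqdef]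
    field_simp
  have hqs : ContDiffOn ℝ ∞ q U :=
    (hp.pow 2).div hHr fun x hx => (Real.rpow_pos_of_pos (hHpos x hx) _).ne'
  have hζd : ∀ x ∈ U, HasDerivAt ζ (√(q x)) x := fun x hx =>
    (hasDerivAt_sub_mul_phaseFactor_rpow hUo hU hcU hp hpos hx).congr_of_eventuallyEq
      (by filter_upwards [hUo.mem_nhds hx] with y hy using hζ y hy)
  have hmono : StrictMonoOn ζ (Ici 0) := by
    refine strictMonoOn_of_deriv_pos (convex_Ici 0) (hζs.continuousOn.mono hsub) fun x hx => ?_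
    have hxU := hsub (interior_subset hx)
    rw [(hζd x hxU).deriv]
    exact Real.sqrt_pos.2 (hqpos x hxU)
  have hinv : ∀ x ∈ Ici (0 : ℝ), Function.invFunOn ζ (Ici 0) (ζ x) = x :=
    fun x hx => hmono.injOn.leftInvOn_invFunOn hx
  set xinv := Function.invFunOn ζ (Ici 0)
  have hioi : Ioi (0 : ℝ) ⊆ U := Ioi_subset_Ici_self.trans hsub
  have ha : ∀ x ∈ Ioi (0 : ℝ), 0 < q x ^ ((1 : ℝ) / 4) := fun x hx =>
    Real.rpow_pos_of_pos (hqpos x (hioi hx)) _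
  have has : ContDiffOn ℝ 2 (fun x => q x ^ ((1 : ℝ) / 4)) (Ioi 0) :=
    contDiffOn_infty.1 ((hqs.rpow_const_of_ne fun x hx => (hqpos x hx).ne').mono hioi) 2
  have ha2 : ∀ x ∈ U, (q x ^ ((1 : ℝ) / 4)) ^ 2 = √(q x) := fun x hx => by
    rw [← Real.rpow_mul_natCast (hqpos x hx).le, Real.sqrt_eq_rpow]
    norm_num
  have hstrict : ∀ x ∈ Ioi (0 : ℝ), HasStrictDerivAt ζ ((q x ^ ((1 : ℝ) / 4)) ^ 2) x :=
    fun x hx => by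
      rw [ha2 x (hioi hx)]
      exact (hζs.contDiffAt (hUo.mem_nhds (hioi hx))).hasStrictDerivAt' (hζd x (hioi hx)) (by simp)
  refine ⟨c, ζ, q, xinv, fun z => 1 / 4 * (q (xinv z))⁻¹ * (1 + xinv z ^ 2)⁻¹ -
      q (xinv z) ^ (-(1 : ℝ) / 4) * deriv (deriv (fun z => q (xinv z) ^ ((1 : ℝ) / 4))) z,
    hc0, hcE, fun x hx hxE => ?_, hcd.ne, hζdef,
    fun n => (hζs.mono hsub).of_le (by exact_mod_cast le_top), hmono,
    fun x hx => hqpos x (hsub hx), fun x hx hxc => ?_, fun x hx => hζd x (hsub hx), hinv,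
    fun x hx => ?_, fun f f' f'' hf hf' hode x hx => ?_⟩
  · rcases lt_trichotomy x c with hxc | hxc | hxc
    · exact absurd hxE (hleft x ⟨hx.le, hxc⟩).ne'
    · exact hxc
    · exact absurd hxE (hright x hxc).ne
  · have hne : ζ x ≠ 0 := by
      rw [hζ x (hsub hx)]
      exact mul_ne_zero (sub_ne_zero.2 hxc) (Real.rpow_pos_of_pos (hHpos x (hsub hx)) _).ne'
    rw [eq_div_iff hne, hqζ x (hsub hx)]
    ring
  · simp only [hinv x (Ioi_subset_Ici_self hx)]
  · rw [deriv_deriv_liouville (a := fun x => q x ^ ((1 : ℝ) / 4)) isOpen_Ioi ha has hstrict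
      (fun y hy => hinv y (Ioi_subset_Ici_self hy)) hf hf' hx]
    simp only [hinv x (Ioi_subset_Ici_self hx)]
    have hq := hqpos x (hioi hx)
    have hax := ha x hx
    have hq4 : q x = (q x ^ ((1 : ℝ) / 4)) ^ 4 := by
      rw [← Real.rpow_mul_natCast hq.le]
      norm_num
    have hneg4 : q x ^ (-(1 : ℝ) / 4) = (q x ^ ((1 : ℝ) / 4))⁻¹ := by
      rw [← Real.rpow_neg hq.le]
      norm_num
    have hQx := hqζ x (hioi hx)
    rw [hneg4]
    generalize deriv (deriv fun z => q (xinv z) ^ ((1 : ℝ) / 4)) (ζ x) = D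
    generalize q x ^ ((1 : ℝ) / 4) = b at hq4 hax
    rw [hq4, V0] at hQx
    rw [hq4]
    have hfx : h ^ 2 * f'' x = -(b ^ 4 * ζ x + h ^ 2 / 4 * (1 + x ^ 2)⁻¹) * f x := by
      linear_combination (-1) * hode x + f x * hQx
    have hsplit : -h ^ 2 * (D * f x + f'' x / b ^ 3) =
        -h ^ 2 * D * f x - (h ^ 2 * f'' x) / b ^ 3 := by ring
    rw [hsplit, hfx]
    field_simp
    ring
end
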